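/- For every l ≥ 1, if the complete cubic Halin graph G_l admits a star 5-edge coloring, then the complete cubic Halin graph G_{l+3} also admits a star 5-edge coloring. -/

import Mathlib

/-- A star `k`-edge coloring of a simple graph `G`: a proper edge coloring with colors
`0, …, k-1` such that the edges of every path of length 4 and of every cycle of length 4
receive at least 3 distinct colors. -/
def IsStarEdgeColoring {V : Type*} (G : SimpleGraph V) (k : ℕ) (c : Sym2 V → ℕ) : Prop :=
  (∀ e ∈ G.edgeSet, c e < k) ∧
  (∀ a b b' : V, G.Adj a b → G.Adj a b' → b ≠ b' → c s(a, b) ≠ c s(a, b')) ∧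
  (∀ v0 v1 v2 v3 v4 : V, ([v0, v1, v2, v3, v4] : List V).Nodup →
    G.Adj v0 v1 → G.Adj v1 v2 → G.Adj v2 v3 → G.Adj v3 v4 →
    3 ≤ ({c s(v0, v1), c s(v1, v2), c s(v2, v3), c s(v3, v4)} : Finset ℕ).card) ∧
  (∀ v0 v1 v2 v3 : V, ([v0, v1, v2, v3] : List V).Nodup →
    G.Adj v0 v1 → G.Adj v1 v2 → G.Adj v2 v3 → G.Adj v3 v0 →
    3 ≤ ({c s(v0, v1), c s(v1, v2), c s(v2, v3), c s(v3, v0)} : Finset ℕ).card)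

/-- Vertices of the complete cubic Halin graph `G_l`: the root (`none`), and for
each `1 ≤ j ≤ l` the level-`j` vertices `some ⟨(a, bs), _⟩` with `a : Fin 3` and
`bs : List (Fin 2)` of length `j - 1` (so `bs.length < l`). -/
abbrev HalinVert (l : ℕ) := Option { p : Fin 3 × List (Fin 2) // p.2.length < l }

/-- The value of a binary string, most significant digit first. -/
def binVal (bs : List (Fin 2)) : ℕ := bs.foldl (fun n b => 2 * n + b.val) 0

/-- The position of a leaf `(a, bs)` in the lexicographic order of leaf indices. -/
def leafIdx (l : ℕ) (p : Fin 3 × List (Fin 2)) : ℕ := p.1.val * 2 ^ (l - 1) + binVal p.2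

/-- Base adjacency relation for `G_l`: the root is adjacent to the three level-1
vertices; every non-leaf vertex is adjacent to its two children (obtained by
appending an element of `Fin 2` to its index); and the leaves (whose index lists
have length `l - 1`) are joined in a cycle following the lexicographic order of
their indices. -/
def halinRel (l : ℕ) : HalinVert l → HalinVert l → Prop
  | none, some q => q.1.2 = []
  | some p, some q =>
      (∃ d : Fin 2, q.1.1 = p.1.1 ∧ q.1.2 = p.1.2 ++ [d]) ∨
      (p.1.2.length = l - 1 ∧ q.1.2.length = l - 1 ∧
        (leafIdx l q.1 = leafIdx l p.1 + 1 ∨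
          (leafIdx l p.1 = 3 * 2 ^ (l - 1) - 1 ∧ leafIdx l q.1 = 0)))
  | _, _ => False

/-- The complete cubic Halin graph `G_l`, whose characteristic tree is the complete
tree `T_l` with `l` levels. -/
def completeHalin (l : ℕ) : SimpleGraph (HalinVert l) := SimpleGraph.fromRel (halinRel l)

/-- A proper edge coloring is a star edge coloring iff no vertex `v` has two neighbors `x ≠ y`
such that the color of `vy` appears at `x` and the color of `vx` appears at `y`. -/
theorem isStarEdgeColoring_iff {V : Type*} (G : SimpleGraph V) (k : ℕ) (c : Sym2 V → ℕ) :
    IsStarEdgeColoring G k c ↔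
      (∀ v w, G.Adj v w → c s(v, w) < k) ∧
      (∀ v x y, G.Adj v x → G.Adj v y → x ≠ y → c s(v, x) ≠ c s(v, y)) ∧
      (∀ v x y w z, G.Adj v x → G.Adj v y → x ≠ y → G.Adj x w → G.Adj y z →
        c s(x, w) = c s(v, y) → c s(y, z) ≠ c s(v, x)) := by
  constructor
  · rintro ⟨hk, hp, h4, hc⟩
    refine ⟨fun v w h => hk _ h, hp, ?_⟩
    intro v x y w z hx hy hxy hw hz e1 e2
    have hne := hp v x y hx hy hxy
    have hwv : w ≠ v := by
      rintro rfl
      exact hne (by rw [← e1, Sym2.eq_swap])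
    have hzv : z ≠ v := by
      rintro rfl
      exact hne (by rw [← e2, Sym2.eq_swap])
    have hwy : w ≠ y := by
      rintro rfl
      exact hp w x v hw.symm hy.symm hx.ne' (by rw [Sym2.eq_swap, e1, Sym2.eq_swap])
    have hzx : z ≠ x := by
      rintro rfl
      exact hp z y v hz.symm hx.symm hy.ne' (by rw [Sym2.eq_swap, e2, Sym2.eq_swap])
    by_cases hwz : w = z
    · subst hwz
      have := hc v x w y (by simp [hx.ne, hwv.symm, hy.ne, hw.ne, hxy, hwy]) hx hw hz.symm hy.symm
      rw [e1, Sym2.eq_swap (a := w), e2, Sym2.eq_swap (a := y)] at this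
      have h2 : ({c s(v, x), c s(v, y), c s(v, x), c s(v, y)} : Finset ℕ) =
        {c s(v, x), c s(v, y)} := by ext; simp
      rw [h2] at this
      exact absurd (this.trans Finset.card_le_two) (by norm_num)
    · have := h4 w x v y z (by simp [hw.ne', hwv, hwy, hwz, hx.ne', hxy, hzx.symm, hy.ne,
        hzv.symm, hz.ne]) hw.symm hx.symm hy hz
      rw [Sym2.eq_swap (a := w), e1, Sym2.eq_swap (a := x), e2] at this
      have h2 : ({c s(v, y), c s(v, x), c s(v, y), c s(v, x)} : Finset ℕ) =
        {c s(v, y), c s(v, x)} := by ext; simp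
      rw [h2] at this
      exact absurd (this.trans Finset.card_le_two) (by norm_num)
  · rintro ⟨hk, hp, h4⟩
    have card_three : ∀ p q r s : ℕ, p ≠ q → q ≠ r → r ≠ s → ¬ (p = r ∧ s = q) →
        3 ≤ ({p, q, r, s} : Finset ℕ).card := by
      intro p q r s h1 h2 h3 h
      by_cases hpr : p = r
      · have hsq : s ≠ q := fun h' => h ⟨hpr, h'⟩
        refine (Finset.card_eq_three.2 ⟨q, r, s, h2, hsq.symm, h3, rfl⟩).symm.le.trans
          (Finset.card_le_card ?_)
        intro; simp; tauto
      · refine (Finset.card_eq_three.2 ⟨p, q, r, h1, hpr, h2, rfl⟩).symm.le.trans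
          (Finset.card_le_card ?_)
        intro; simp; tauto
    have key : ∀ v0 v1 v2 v3 v4 : V, v0 ≠ v2 → v1 ≠ v3 → v2 ≠ v4 →
        G.Adj v0 v1 → G.Adj v1 v2 → G.Adj v2 v3 → G.Adj v3 v4 →
        3 ≤ ({c s(v0, v1), c s(v1, v2), c s(v2, v3), c s(v3, v4)} : Finset ℕ).card := by
      intro v0 v1 v2 v3 v4 h02 h13 h24 a01 a12 a23 a34
      refine card_three _ _ _ _ ?_ ?_ ?_ ?_
      · rw [Sym2.eq_swap]; exact hp _ _ _ a01.symm a12 h02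
      · rw [Sym2.eq_swap]; exact hp _ _ _ a12.symm a23 h13
      · rw [Sym2.eq_swap]; exact hp _ _ _ a23.symm a34 h24
      · rintro ⟨e1, e2⟩
        exact h4 v2 v1 v3 v0 v4 a12.symm a23 h13 a01.symm a34 (by rw [Sym2.eq_swap, e1])
          (by rw [e2, Sym2.eq_swap])
    refine ⟨?_, hp, ?_, ?_⟩
    · intro e he
      induction e with
      | _ v w => exact hk v w he
    · intro v0 v1 v2 v3 v4 hn
      simp at hn
      exact key _ _ _ _ _ (by tauto) (by tauto) (by tauto)
    · intro v0 v1 v2 v3 hn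
      simp at hn
      exact key _ _ _ _ _ (by tauto) (by tauto) (by tauto)

/-- A cubic graph on the set `S`, presented by the three neighbors `nbr p s` of each vertex `p`;
the edge leaving `p` through port `s` enters the other endpoint through port `back p s`. -/
structure CubicPorts (X : Type*) where
  S : Set X
  nbr : X → Fin 3 → X
  back : X → Fin 3 → Fin 3
  nbr_mem : ∀ p ∈ S, ∀ s, nbr p s ∈ S
  nbr_injective : ∀ p ∈ S, Function.Injective (nbr p)
  nbr_back : ∀ p ∈ S, ∀ s, nbr (nbr p s) (back p s) = p

/-- A star `k`-edge coloring of a cubic graph presented by ports: `e p s` is the color of the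
edge leaving `p` through port `s`. -/
structure CubicPorts.IsStarColoring {X : Type*} (P : CubicPorts X) (k : ℕ)
    (e : X → Fin 3 → ℕ) : Prop where
  lt : ∀ p ∈ P.S, ∀ s, e p s < k
  back : ∀ p ∈ P.S, ∀ s, e (P.nbr p s) (P.back p s) = e p s
  injective : ∀ p ∈ P.S, Function.Injective (e p)
  star : ∀ p ∈ P.S, ∀ s t, s ≠ t → ∀ s' t',
    e (P.nbr p s) s' = e p t → e (P.nbr p t) t' ≠ e p s

/-- Star edge colorings of a graph correspond to port colorings of any presentation by ports. -/
theorem CubicPorts.exists_isStarEdgeColoring_iff {V X : Type*} (P : CubicPorts X)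
    (G : SimpleGraph V) (f : V → X) (hf : Function.Injective f) (hS : Set.range f = P.S)
    (hadj : ∀ v w, G.Adj v w ↔ ∃ s, P.nbr (f v) s = f w) (k : ℕ) :
    (∃ c, IsStarEdgeColoring G k c) ↔ ∃ e, P.IsStarColoring k e := by
  classical
  have hmem : ∀ v, f v ∈ P.S := fun v => hS ▸ Set.mem_range_self v
  constructor
  · rintro ⟨c, hc⟩
    obtain ⟨hk, hp, h4⟩ := (isStarEdgeColoring_iff G k c).1 hc
    rcases isEmpty_or_nonempty V with hV | hV
    · have hS' : ∀ p, p ∉ P.S := by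
        intro p hp
        rw [← hS] at hp
        exact hV.elim hp.choose
      exact ⟨fun _ _ => 0, fun p h => (hS' p h).elim, fun p h => (hS' p h).elim,
        fun p h => (hS' p h).elim, fun p h => (hS' p h).elim⟩
    let g := Function.invFun f
    have hg : ∀ v, g (f v) = v := Function.leftInverse_invFun hf
    have hnb : ∀ v s, ∃ w, P.nbr (f v) s = f w := by
      intro v s
      have := P.nbr_mem _ (hmem v) s
      rw [← hS] at this
      obtain ⟨w, hw⟩ := this
      exact ⟨w, hw.symm⟩
    have hall : ∀ {Q : X → Prop}, (∀ v, Q (f v)) → ∀ p ∈ P.S, Q p := by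
      intro Q hQ p hp
      rw [← hS] at hp
      obtain ⟨v, rfl⟩ := hp
      exact hQ v
    have hne : ∀ v s t w z, s ≠ t → P.nbr (f v) s = f w → P.nbr (f v) t = f z → w ≠ z := by
      rintro v s t w z hst hw hz rfl
      exact hst (P.nbr_injective _ (hmem v) (hw.trans hz.symm))
    refine ⟨fun p s => c s(g p, g (P.nbr p s)), hall ?_, hall ?_, hall ?_, hall ?_⟩
    · intro v s
      obtain ⟨w, hw⟩ := hnb v s
      simpa only [hw, hg] using hk _ _ ((hadj _ _).2 ⟨s, hw⟩)
    · intro v s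
      simp only [P.nbr_back _ (hmem v) s]
      rw [Sym2.eq_swap]
    · intro v s t hst
      by_contra hne'
      obtain ⟨w, hw⟩ := hnb v s
      obtain ⟨z, hz⟩ := hnb v t
      simp only [hw, hz, hg] at hst
      exact hp _ _ _ ((hadj _ _).2 ⟨s, hw⟩) ((hadj _ _).2 ⟨t, hz⟩) (hne _ _ _ _ _ hne' hw hz) hst
    · intro v s t hst s' t'
      obtain ⟨x, hx⟩ := hnb v s
      obtain ⟨y, hy⟩ := hnb v t
      obtain ⟨w, hw⟩ := hnb x s'
      obtain ⟨z, hz⟩ := hnb y t'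
      simp only [hx, hy, hw, hz, hg]
      exact h4 v x y w z ((hadj _ _).2 ⟨s, hx⟩) ((hadj _ _).2 ⟨t, hy⟩) (hne _ _ _ _ _ hst hx hy)
        ((hadj _ _).2 ⟨s', hw⟩) ((hadj _ _).2 ⟨t', hz⟩)
  · rintro ⟨e, hk, hb, hi, h4⟩
    let col : V → V → ℕ := fun v w => if h : ∃ s, P.nbr (f v) s = f w then e (f v) h.choose else 0
    have hcol : ∀ v w s, P.nbr (f v) s = f w → col v w = e (f v) s := by
      intro v w s hs
      have h : ∃ s, P.nbr (f v) s = f w := ⟨s, hs⟩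
      have h1 : h.choose = s := P.nbr_injective _ (hmem v) (h.choose_spec.trans hs.symm)
      simp only [col, dif_pos h, h1]
    have hsymm : ∀ v w, col v w = col w v := by
      intro v w
      by_cases h : ∃ s, P.nbr (f v) s = f w
      · obtain ⟨s, hs⟩ := h
        have h1 := P.nbr_back _ (hmem v) s
        have h2 := hb _ (hmem v) s
        rw [hs] at h1 h2
        rw [hcol v w s hs, hcol w v _ h1, h2]
      · have h' : ¬ ∃ s, P.nbr (f w) s = f v := by
          rwa [← hadj, G.adj_comm, hadj]
        simp only [col, dif_neg h, dif_neg h']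
    refine ⟨Sym2.lift ⟨col, hsymm⟩, (isStarEdgeColoring_iff G k _).2 ⟨?_, ?_, ?_⟩⟩
    · intro v w h
      obtain ⟨s, hs⟩ := (hadj _ _).1 h
      simpa only [Sym2.lift_mk, hcol _ _ _ hs] using hk _ (hmem v) s
    · intro v x y hx hy hxy
      obtain ⟨s, hs⟩ := (hadj _ _).1 hx
      obtain ⟨t, ht⟩ := (hadj _ _).1 hy
      simp only [Sym2.lift_mk, hcol _ _ _ hs, hcol _ _ _ ht]
      intro h
      obtain rfl := hi _ (hmem v) h
      exact hxy (hf (hs.symm.trans ht))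
    · intro v x y w z hx hy hxy hw hz
      obtain ⟨s, hs⟩ := (hadj _ _).1 hx
      obtain ⟨t, ht⟩ := (hadj _ _).1 hy
      obtain ⟨s', hs'⟩ := (hadj _ _).1 hw
      obtain ⟨t', ht'⟩ := (hadj _ _).1 hz
      simp only [Sym2.lift_mk, hcol _ _ _ hs, hcol _ _ _ ht, hcol _ _ _ hs', hcol _ _ _ ht']
      have := h4 _ (hmem v) s t (by rintro rfl; exact hxy (hf (hs.symm.trans ht))) s' t'
      rwa [hs, ht] at this

/-- The number of vertices at a given level of a complete cubic Halin graph. -/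
def levelWidth : ℕ → ℕ
  | 0 => 1
  | j + 1 => 3 * 2 ^ j

/-- The neighbors in `G_l` of the vertex at position `m` of level `j`. The ports `0, 1, 2` lead to
the parent and the two children, or, at a leaf, to the parent and the two adjacent leaves. -/
def halinNbr (l : ℕ) : ℕ × ℕ → Fin 3 → ℕ × ℕ
  | (0, _), s => (1, s)
  | (1, _), 0 => (0, 0)
  | (j + 2, m), 0 => (j + 1, m / 2)
  | (j + 1, m), 1 =>
    if j + 1 < l then (j + 2, 2 * m) else (j + 1, if m = 0 then 3 * 2 ^ j - 1 else m - 1)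
  | (j + 1, m), 2 =>
    if j + 1 < l then (j + 2, 2 * m + 1) else (j + 1, if m + 1 = 3 * 2 ^ j then 0 else m + 1)

/-- The ports through which the edges leaving a vertex of `G_l` enter its neighbors. -/
def halinBack (l : ℕ) : ℕ × ℕ → Fin 3 → Fin 3
  | (0, _), _ => 0
  | (1, m), 0 => Fin.ofNat 3 m
  | (_ + 2, m), 0 => if m % 2 = 0 then 1 else 2
  | (j + 1, _), 1 => if j + 1 < l then 0 else 2
  | (j + 1, _), 2 => if j + 1 < l then 0 else 1

/-- The complete cubic Halin graph presented by ports, with vertices given by level and position. -/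
def halinPorts (l : ℕ) (hl : 1 ≤ l) : CubicPorts (ℕ × ℕ) where
  S := {p | p.1 ≤ l ∧ p.2 < levelWidth p.1}
  nbr := halinNbr l
  back := halinBack l
  nbr_mem := by
    rintro ⟨j, m⟩ ⟨hj, hm⟩ s
    rcases j with _ | _ | j <;> fin_cases s <;>
      simp [halinNbr, levelWidth] at hj hm ⊢ <;> (try split_ifs) <;>
      (try simp [pow_succ]) <;> grind
  nbr_injective := by
    rintro ⟨j, m⟩ ⟨hj, hm⟩ s t h
    rcases j with _ | _ | j <;> fin_cases s <;> fin_cases t <;>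
      simp [halinNbr, levelWidth] at hj hm h ⊢ <;> (try split_ifs at h) <;>
      simp [pow_succ] at h <;> grind
  nbr_back := by
    rintro ⟨j, m⟩ ⟨hj, hm⟩ s
    have h2 : 0 < 2 ^ j := by positivity
    rcases j with _ | _ | j <;> fin_cases s <;>
      simp [halinNbr, halinBack, levelWidth] at hj hm h2 ⊢ <;> (try split_ifs) <;>
      (try simp [*]) <;> grind

theorem binVal_append_singleton (bs : List (Fin 2)) (d : Fin 2) :
    binVal (bs ++ [d]) = 2 * binVal bs + d := by
  simp [binVal]

theorem binVal_lt (bs : List (Fin 2)) : binVal bs < 2 ^ bs.length := by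
  induction bs using List.reverseRecOn with
  | nil => simp [binVal]
  | append_singleton bs d ih =>
    rw [binVal_append_singleton, List.length_append, List.length_singleton, pow_succ]
    omega

theorem binVal_injective_of_length_eq (bs : List (Fin 2)) :
    ∀ bs' : List (Fin 2), bs.length = bs'.length → binVal bs = binVal bs' → bs = bs' := by
  induction bs using List.reverseRecOn with
  | nil => intro bs' h _; exact (List.eq_nil_of_length_eq_zero h.symm).symm
  | append_singleton bs d ih =>
    intro bs' h hv
    rcases List.eq_nil_or_concat bs' with rfl | ⟨bs', d', rfl⟩
    · simp at h
    · rw [List.concat_eq_append] at *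
      rw [binVal_append_singleton, binVal_append_singleton] at hv
      have hd : d = d' := by ext; omega
      rw [ih bs' (by simpa using h) (by omega), hd]

/-- The level of a vertex of `G_l` and its position within that level. -/
def halinCoord (l : ℕ) : HalinVert l → ℕ × ℕ
  | none => (0, 0)
  | some p => (p.1.2.length + 1, p.1.1.val * 2 ^ p.1.2.length + binVal p.1.2)

theorem halinCoord_injective (l : ℕ) : Function.Injective (halinCoord l) := by
  rintro (_ | ⟨⟨a, bs⟩, h⟩) (_ | ⟨⟨a', bs'⟩, h'⟩) heq
  · rfl
  · simp [halinCoord] at heq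
  · simp [halinCoord] at heq
  · simp only [halinCoord, Prod.mk.injEq, Nat.add_right_cancel_iff] at heq
    obtain ⟨hlen, hv⟩ := heq
    have h1 := binVal_lt bs
    have h2 := binVal_lt bs'
    rw [← hlen] at hv h2
    have ha : a.val = a'.val := by
      have e1 : (a.val * 2 ^ bs.length + binVal bs) / 2 ^ bs.length = a := by
        rw [mul_comm, Nat.mul_add_div (by positivity), Nat.div_eq_of_lt h1, add_zero]
      have e2 : (a'.val * 2 ^ bs.length + binVal bs') / 2 ^ bs.length = a' := by
        rw [mul_comm, Nat.mul_add_div (by positivity), Nat.div_eq_of_lt h2, add_zero]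
      rw [← e1, ← e2, hv]
    rw [ha] at hv
    obtain rfl := Fin.ext ha
    obtain rfl := binVal_injective_of_length_eq bs bs' hlen (by omega)
    rfl

theorem range_halinCoord (l : ℕ) :
    Set.range (halinCoord l) = {p | p.1 ≤ l ∧ p.2 < levelWidth p.1} := by
  apply Set.Subset.antisymm
  · rintro _ ⟨_ | ⟨⟨a, bs⟩, h⟩, rfl⟩
    · simp [halinCoord, levelWidth]
    · have := binVal_lt bs
      refine ⟨h, ?_⟩
      simp only [halinCoord, levelWidth]
      have ha : a.val = 0 ∨ a.val = 1 ∨ a.val = 2 := by omega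
      rcases ha with ha | ha | ha <;> rw [ha] <;> omega
  · have key : ∀ j m, m < 3 * 2 ^ j → ∃ (a : Fin 3) (bs : List (Fin 2)),
        bs.length = j ∧ a.val * 2 ^ j + binVal bs = m := by
      intro j
      induction j with
      | zero => intro m hm; exact ⟨⟨m, by omega⟩, [], rfl, by simp [binVal]⟩
      | succ j ih =>
        intro m hm
        obtain ⟨a, bs, hlen, hv⟩ := ih (m / 2) (by rw [pow_succ] at hm; omega)
        refine ⟨a, bs ++ [⟨m % 2, by omega⟩], by simp [hlen], ?_⟩
        rw [binVal_append_singleton, pow_succ, ← mul_assoc]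
        simp only
        omega
    rintro ⟨_ | j, m⟩ ⟨hj, hm⟩
    · exact ⟨none, by simp [halinCoord]; simp [levelWidth] at hm; exact hm.symm⟩
    · obtain ⟨a, bs, rfl, rfl⟩ := key j m hm
      exact ⟨some ⟨(a, bs), hj⟩, rfl⟩

/-- The relation `halinRel` in terms of levels and positions. -/
theorem halinRel_iff (l : ℕ) (hl : 1 ≤ l) (v w : HalinVert l) :
    halinRel l v w ↔
      ((halinCoord l v).1 = 0 ∧ (halinCoord l w).1 = 1) ∨
      (1 ≤ (halinCoord l v).1 ∧ (halinCoord l w).1 = (halinCoord l v).1 + 1 ∧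
        (halinCoord l w).2 / 2 = (halinCoord l v).2) ∨
      ((halinCoord l v).1 = l ∧ (halinCoord l w).1 = l ∧
        ((halinCoord l w).2 = (halinCoord l v).2 + 1 ∨
          ((halinCoord l v).2 + 1 = levelWidth l ∧ (halinCoord l w).2 = 0))) := by
  obtain ⟨l, rfl⟩ := Nat.exists_eq_add_of_le' hl
  rcases v with _ | ⟨⟨a, bs⟩, h⟩ <;> rcases w with _ | ⟨⟨a', bs'⟩, h'⟩
  · simp [halinRel, halinCoord]
  · simp [halinRel, halinCoord]
  · simp [halinRel, halinCoord]
  · have htree : (∃ d : Fin 2, a' = a ∧ bs' = bs ++ [d]) ↔ bs'.length = bs.length + 1 ∧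
        (a'.val * 2 ^ bs'.length + binVal bs') / 2 = a.val * 2 ^ bs.length + binVal bs := by
      constructor
      · rintro ⟨d, rfl, rfl⟩
        refine ⟨by simp, ?_⟩
        rw [binVal_append_singleton, List.length_append, List.length_singleton, pow_succ,
          ← mul_assoc]
        omega
      · rintro ⟨hlen, hv⟩
        rcases List.eq_nil_or_concat bs' with rfl | ⟨bs', d', rfl⟩
        · simp at hlen
        · rw [List.concat_eq_append] at *
          rw [binVal_append_singleton, hlen, pow_succ, ← mul_assoc] at hv
          have hlen' : bs'.length = bs.length := by simpa using hlen
          have := @halinCoord_injective (l + 1) (some ⟨(a', bs'), by simp at h' ⊢; omega⟩)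
            (some ⟨(a, bs), h⟩) (by
              simp only [halinCoord, hlen', Prod.mk.injEq, true_and]
              omega)
          simp only [Option.some.injEq, Subtype.mk.injEq, Prod.mk.injEq] at this
          exact ⟨d', this.1, by rw [this.2]⟩
    have hpos : 0 < 2 ^ l := by positivity
    simp only [halinRel, halinCoord, htree, leafIdx, levelWidth, Nat.add_sub_cancel]
    constructor
    · rintro (h | ⟨h1, h2, h3⟩)
      · right; left; omega
      · right; right
        rw [h1, h2]
        omega
    · rintro (h | h | ⟨h1, h2, h3⟩)
      · omega
      · left; omega
      · right
        have h1' : bs.length = l := by omega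
        have h2' : bs'.length = l := by omega
        rw [h1', h2'] at h3
        omega

theorem completeHalin_adj_iff (l : ℕ) (hl : 1 ≤ l) (v w : HalinVert l) :
    (completeHalin l).Adj v w ↔ ∃ s, halinNbr l (halinCoord l v) s = halinCoord l w := by
  rw [completeHalin, SimpleGraph.fromRel_adj, halinRel_iff l hl, halinRel_iff l hl,
    ← (halinCoord_injective l).ne_iff]
  have hv : halinCoord l v ∈ Set.range (halinCoord l) := ⟨v, rfl⟩
  have hw : halinCoord l w ∈ Set.range (halinCoord l) := ⟨w, rfl⟩
  rw [range_halinCoord] at hv hw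
  generalize halinCoord l v = p at *
  generalize halinCoord l w = q at *
  obtain ⟨j, m⟩ := p
  obtain ⟨j', m'⟩ := q
  obtain ⟨hj, hm⟩ := hv
  obtain ⟨hj', hm'⟩ := hw
  have key : (∃ s, halinNbr l (j, m) s = (j', m')) ↔ halinNbr l (j, m) 0 = (j', m') ∨
      halinNbr l (j, m) 1 = (j', m') ∨ halinNbr l (j, m) 2 = (j', m') := by
    simp [Fin.exists_fin_succ]
  rw [key]
  obtain ⟨l, rfl⟩ := Nat.exists_eq_add_of_le' hl
  rcases l with _ | l <;> rcases j with _ | _ | j <;> rcases j' with _ | _ | j' <;>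
    simp [halinNbr, levelWidth] at hj hj' hm hm' ⊢ <;> grind

/-- The colors, as letters `0, …, 4`, of the edges at the vertex at position `r` of level `i` in
the complete binary tree of depth three that replaces a leaf; the edges at the root of the tree
have letters `0, 1, 2`. The ports are those of `halinNbr`. -/
def blockColor : ℕ → ℕ → Fin 3 → Fin 5
  | 0, _ => ![0, 1, 2]
  | 1, 0 => ![1, 2, 3]
  | 1, _ => ![2, 3, 4]
  | 2, 0 => ![2, 0, 3]
  | 2, 1 => ![3, 1, 0]
  | 2, 2 => ![3, 0, 1]
  | 2, _ => ![4, 0, 1]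
  | _, 0 => ![0, 1, 4]
  | _, 1 => ![3, 4, 0]
  | _, 2 => ![1, 0, 2]
  | _, 3 => ![0, 2, 4]
  | _, 4 => ![0, 4, 2]
  | _, 5 => ![1, 2, 3]
  | _, 6 => ![0, 3, 4]
  | _, _ => ![1, 4, 2]

/-- The neighbors within a block, or `none` where the edge leaves the block. -/
def blockNbr : ℕ → ℕ → Fin 3 → Option (ℕ × ℕ)
  | 0, _, 0 => none
  | i + 1, r, 0 => some (i, r / 2)
  | i, r, 1 => if i < 3 then some (i + 1, 2 * r) else if r = 0 then none else some (i, r - 1)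
  | i, r, 2 => if i < 3 then some (i + 1, 2 * r + 1) else if r = 7 then none else some (i, r + 1)

/-- The ports through which the edges within a block enter their endpoints. -/
def blockBack (i r : ℕ) : Fin 3 → Fin 3 :=
  ![if r % 2 = 0 then 1 else 2, if i < 3 then 0 else 2, if i < 3 then 0 else 1]

theorem blockNbr_lt {i r : ℕ} (hi : i < 4) (hr : r < 2 ^ i) (s : Fin 3) (p : ℕ × ℕ)
    (h : blockNbr i r s = some p) : p.1 < 4 ∧ p.2 < 2 ^ p.1 := by
  have : ∀ i < 4, ∀ r < 2 ^ i, ∀ s, ∀ p ∈ blockNbr i r s, p.1 < 4 ∧ p.2 < 2 ^ p.1 := by decide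
  exact this i hi r hr s p h

theorem blockColor_back : ∀ i < 4, ∀ r < 2 ^ i, ∀ s, ∀ p ∈ blockNbr i r s,
    blockColor p.1 p.2 (blockBack i r s) = blockColor i r s := by decide

theorem blockColor_injective : ∀ i < 4, ∀ r < 2 ^ i, ∀ s t,
    blockColor i r s = blockColor i r t → s = t := by decide

theorem blockColor_star : ∀ i < 4, ∀ r < 2 ^ i, ∀ s t, s ≠ t →
    ∀ p ∈ blockNbr i r s, ∀ q ∈ blockNbr i r t, ∀ s' t',
      blockColor p.1 p.2 s' = blockColor i r t → blockColor q.1 q.2 t' ≠ blockColor i r s := by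
  decide

theorem blockNbr_isSome : ∀ i < 4, ∀ r < 2 ^ i, ∀ s t, s ≠ t →
    (blockNbr i r s).isNone → (blockNbr i r t).isSome := by decide

theorem blockColor_star_of_isNone : ∀ i < 4, ∀ r < 2 ^ i, ∀ s t, s ≠ t →
    ∀ q ∈ blockNbr i r t, (blockNbr i r s).isNone → ∀ t',
      blockColor q.1 q.2 t' ≠ blockColor i r s := by decide

set_option synthInstance.maxSize 1000 in
theorem blockNbr_isSome_or : ∀ i < 4, ∀ r < 2 ^ i, ∀ s, (blockNbr i r s).isSome ∨
    (i = 0 ∧ r = 0 ∧ s = 0) ∨ (i = 3 ∧ r = 0 ∧ s = 1) ∨ (i = 3 ∧ r = 7 ∧ s = 2) := by decide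

theorem halinNbr_block {l q i r : ℕ} (hl : 1 ≤ l) (hi : i < 4) (hr : r < 2 ^ i) (s : Fin 3)
    (p : ℕ × ℕ) (h : blockNbr i r s = some p) :
    halinNbr (l + 3) (l + i, 2 ^ i * q + r) s = (l + p.1, 2 ^ p.1 * q + p.2) := by
  obtain ⟨l, rfl⟩ := Nat.exists_eq_add_of_le' hl
  have h8 : 2 ^ (l + 3) = 8 * 2 ^ l := by ring
  rw [show l + 1 + i = l + i + 1 by ring]
  interval_cases i <;> fin_cases s <;> simp [blockNbr, halinNbr] at h hr ⊢ <;>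
    (try (have hr' := h.1; replace h := h.2)) <;> subst h <;> simp <;> grind

theorem halinBack_block {l q i r : ℕ} (hl : 1 ≤ l) (hi : i < 4) (s : Fin 3)
    (h : (blockNbr i r s).isSome) :
    halinBack (l + 3) (l + i, 2 ^ i * q + r) s = blockBack i r s := by
  obtain ⟨l, rfl⟩ := Nat.exists_eq_add_of_le' hl
  rw [show l + 1 + i = l + i + 1 by ring]
  interval_cases i <;> fin_cases s <;> simp [blockNbr, blockBack, halinBack] at h ⊢ <;> grind

theorem exists_block {l : ℕ} (hl : 1 ≤ l) {p : ℕ × ℕ} (h1 : p.1 ≤ l + 3)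
    (h2 : p.2 < levelWidth p.1) (h3 : l ≤ p.1) :
    ∃ q i r, q < levelWidth l ∧ i < 4 ∧ r < 2 ^ i ∧ p = (l + i, 2 ^ i * q + r) := by
  obtain ⟨j, m⟩ := p
  obtain ⟨i, rfl⟩ := Nat.exists_eq_add_of_le h3
  obtain ⟨l, rfl⟩ := Nat.exists_eq_add_of_le' hl
  refine ⟨m / 2 ^ i, i, m % 2 ^ i, ?_, by simp at h1; omega, Nat.mod_lt _ (by positivity), ?_⟩
  · rw [Nat.div_lt_iff_lt_mul (by positivity)]
    rw [show l + 1 + i = l + i + 1 by ring] at h2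
    simpa [levelWidth, pow_add, mul_assoc] using h2
  · rw [Nat.div_add_mod]

theorem halinNbr_of_lt {l : ℕ} {p : ℕ × ℕ} (h : p.1 < l) (k : ℕ) :
    halinNbr (l + k) p = halinNbr l p := by
  obtain ⟨j, m⟩ := p
  ext s : 1
  rcases j with _ | _ | j <;> fin_cases s <;> simp [halinNbr] at h ⊢ <;> grind

theorem halinBack_of_lt {l : ℕ} {p : ℕ × ℕ} (h : p.1 < l) (k : ℕ) :
    halinBack (l + k) p = halinBack l p := by
  obtain ⟨j, m⟩ := p
  ext s : 1
  rcases j with _ | _ | j <;> fin_cases s <;> simp [halinBack] at h ⊢ <;> grind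

theorem halinNbr_parent (l l' j m : ℕ) : halinNbr l (j + 1, m) 0 = halinNbr l' (j + 1, m) 0 := by
  rcases j with _ | j <;> simp [halinNbr]

theorem halinBack_parent (l l' j m : ℕ) :
    halinBack l (j + 1, m) 0 = halinBack l' (j + 1, m) 0 := by
  rcases j with _ | j <;> simp [halinBack]

/-- Consecutive leaves of `G_l` are replaced by blocks that are consecutive in `G_{l+3}`. -/
theorem halinNbr_left_block {l q : ℕ} (hl : 1 ≤ l) (hq : q < levelWidth l) :
    ∃ q' < levelWidth l, halinNbr l (l, q) 1 = (l, q') ∧ halinBack l (l, q) 1 = 2 ∧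
      halinNbr (l + 3) (l + 3, 8 * q) 1 = (l + 3, 8 * q' + 7) ∧
      halinBack (l + 3) (l + 3, 8 * q) 1 = 2 := by
  obtain ⟨l, rfl⟩ := Nat.exists_eq_add_of_le' hl
  have h8 : 2 ^ (l + 3) = 8 * 2 ^ l := by ring
  have hpos : 0 < 2 ^ l := by positivity
  rw [show l + 1 + 3 = l + 3 + 1 by ring]
  simp only [levelWidth] at hq
  refine ⟨if q = 0 then 3 * 2 ^ l - 1 else q - 1, ?_⟩
  simp [halinNbr, halinBack, levelWidth]
  grind

theorem halinNbr_right_block {l q : ℕ} (hl : 1 ≤ l) (hq : q < levelWidth l) :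
    ∃ q' < levelWidth l, halinNbr l (l, q) 2 = (l, q') ∧ halinBack l (l, q) 2 = 1 ∧
      halinNbr (l + 3) (l + 3, 8 * q + 7) 2 = (l + 3, 8 * q') ∧
      halinBack (l + 3) (l + 3, 8 * q + 7) 2 = 1 := by
  obtain ⟨l, rfl⟩ := Nat.exists_eq_add_of_le' hl
  have h8 : 2 ^ (l + 3) = 8 * 2 ^ l := by ring
  have hpos : 0 < 2 ^ l := by positivity
  rw [show l + 1 + 3 = l + 3 + 1 by ring]
  simp only [levelWidth] at hq
  refine ⟨if q + 1 = 3 * 2 ^ l then 0 else q + 1, ?_⟩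
  simp [halinNbr, halinBack, levelWidth]
  grind

/-- Three distinct colors can be completed to a list of all five colors. -/
theorem exists_injective_extension (f : Fin 3 → ℕ) (hf : Function.Injective f)
    (h : ∀ s, f s < 5) : ∃ φ : Fin 5 → ℕ, Function.Injective φ ∧ (∀ x, φ x < 5) ∧
      φ 0 = f 0 ∧ φ 1 = f 1 ∧ φ 2 = f 2 := by
  have hinj : Set.InjOn (![f 0, f 1, f 2, 0, 0] : Fin 5 → ℕ) ({0, 1, 2} : Finset (Fin 5)) := by
    have h01 : f 0 ≠ f 1 := hf.ne (by decide)
    have h02 : f 0 ≠ f 2 := hf.ne (by decide)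
    have h12 : f 1 ≠ f 2 := hf.ne (by decide)
    intro x hx y hy hxy
    simp at hx hy
    rcases hx with rfl | rfl | rfl <;> rcases hy with rfl | rfl | rfl <;> simp_all
  obtain ⟨g, hg⟩ := Finset.exists_equiv_extend_of_card_eq (t := Finset.range 5) (by simp)
    (by intro x hx; simp at hx ⊢; rcases hx with rfl | rfl | rfl <;> exact h _) hinj
  exact ⟨fun x => g x, Subtype.val_injective.comp g.injective,
    fun x => Finset.mem_range.1 (g x).2, hg 0 (by simp), hg 1 (by simp), hg 2 (by simp)⟩

/-- A star 5-edge coloring of `G_l` extends to `G_{l+3}` by coloring the tree that replaces a leaf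
with palette `a, b, c` according to `blockColor`, for letters starting with `a, b, c`. -/
theorem halinPorts_isStarColoring_step (l : ℕ) (hl : 1 ≤ l) (e : ℕ × ℕ → Fin 3 → ℕ)
    (he : (halinPorts l hl).IsStarColoring 5 e) :
    ∃ e', (halinPorts (l + 3) (by omega)).IsStarColoring 5 e' := by
  have hφ : ∀ q, ∃ φ : Fin 5 → ℕ, q < levelWidth l → Function.Injective φ ∧ (∀ x, φ x < 5) ∧
      φ 0 = e (l, q) 0 ∧ φ 1 = e (l, q) 1 ∧ φ 2 = e (l, q) 2 := by
    intro q
    by_cases hq : q < levelWidth l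
    · have hmem : (l, q) ∈ (halinPorts l hl).S := ⟨le_rfl, hq⟩
      obtain ⟨φ, h⟩ := exists_injective_extension (e (l, q)) (he.injective _ hmem) (he.lt _ hmem)
      exact ⟨φ, fun _ => h⟩
    · exact ⟨fun _ => 0, fun h => (hq h).elim⟩
  choose φ hφ using hφ
  let e' : ℕ × ℕ → Fin 3 → ℕ := fun p s => if p.1 ≤ l then e p s else
    φ (p.2 / 2 ^ (p.1 - l)) (blockColor (p.1 - l) (p.2 % 2 ^ (p.1 - l)) s)
  have hold : ∀ p, p.1 ≤ l → e' p = e p := fun p hp => by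
    ext s
    simp only [e', if_pos hp]
  have hblock : ∀ q i r s, q < levelWidth l → r < 2 ^ i →
      e' (l + i, 2 ^ i * q + r) s = φ q (blockColor i r s) := by
    intro q i r s hq hr
    rcases i with _ | i
    · obtain ⟨-, -, h0, h1, h2⟩ := hφ q hq
      obtain rfl : r = 0 := by simpa using hr
      rw [hold _ (by simp)]
      fin_cases s <;> simp [blockColor, h0, h1, h2]
    · have h1 : (2 ^ (i + 1) * q + r) / 2 ^ (i + 1) = q := by
        rw [Nat.mul_add_div (by positivity), Nat.div_eq_of_lt hr, add_zero]
      have h2 : (2 ^ (i + 1) * q + r) % 2 ^ (i + 1) = r := by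
        rw [Nat.mul_add_mod, Nat.mod_eq_of_lt hr]
      have h3 : ¬ l + (i + 1) ≤ l := by omega
      simp only [e', if_neg h3, Nat.add_sub_cancel_left, h1, h2]
  have hinner : ∀ q i r s p, q < levelWidth l → i < 4 → r < 2 ^ i → blockNbr i r s = some p →
      ∀ s', e' (halinNbr (l + 3) (l + i, 2 ^ i * q + r) s) s' = φ q (blockColor p.1 p.2 s') := by
    intro q i r s p hq hi hr hp s'
    rw [halinNbr_block hl hi hr s p hp, hblock q p.1 p.2 s' hq (blockNbr_lt hi hr s p hp).2]
  have hcases : ∀ {Q : ℕ × ℕ → Prop}, (∀ p ∈ (halinPorts l hl).S, p.1 < l → Q p) →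
      (∀ q i r, q < levelWidth l → i < 4 → r < 2 ^ i → Q (l + i, 2 ^ i * q + r)) →
      ∀ p ∈ (halinPorts (l + 3) (by omega)).S, Q p := by
    rintro Q h1 h2 p ⟨hp, hp'⟩
    rcases lt_or_ge p.1 l with h | h
    · exact h1 p ⟨h.le, hp'⟩ h
    · obtain ⟨q, i, r, hq, hi, hr, rfl⟩ := exists_block hl hp hp' h
      exact h2 q i r hq hi hr
  have hnbr : ∀ p ∈ (halinPorts l hl).S, ∀ s, e' (halinNbr l p s) = e (halinNbr l p s) :=
    fun p hp s => hold _ ((halinPorts l hl).nbr_mem p hp s).1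
  refine ⟨e', hcases ?_ ?_, hcases ?_ ?_, hcases ?_ ?_, hcases ?_ ?_⟩
  · intro p hp hpl s
    rw [hold p hp.1]
    exact he.lt p hp s
  · intro q i r hq hi hr s
    rw [hblock q i r s hq hr]
    exact (hφ q hq).2.1 _
  · intro p hp hpl s
    change e' (halinNbr (l + 3) p s) (halinBack (l + 3) p s) = e' p s
    rw [halinNbr_of_lt hpl, halinBack_of_lt hpl, hnbr p hp, hold p hp.1]
    exact he.back p hp s
  · intro q i r hq hi hr s
    change e' (halinNbr (l + 3) _ s) (halinBack (l + 3) _ s) = e' _ s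
    rcases hp : blockNbr i r s with _ | p
    · have hmem : (l, q) ∈ (halinPorts l hl).S := ⟨le_rfl, hq⟩
      have hback : ∀ s, e (halinNbr l (l, q) s) (halinBack l (l, q) s) = e (l, q) s :=
        he.back _ hmem
      obtain ⟨-, -, -, h1, h2⟩ := hφ q hq
      rw [hblock q i r s hq hr]
      rcases (blockNbr_isSome_or i hi r hr s).resolve_left (by simp [hp]) with
        ⟨rfl, rfl, rfl⟩ | ⟨rfl, rfl, rfl⟩ | ⟨rfl, rfl, rfl⟩
      · rw [← hblock q 0 0 0 hq hr]
        simp only [pow_zero, one_mul, add_zero]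
        have hl' : l = l - 1 + 1 := by omega
        rw [show halinNbr (l + 3) (l, q) 0 = halinNbr l (l, q) 0 by
            rw [hl']; exact halinNbr_parent _ _ _ _,
          show halinBack (l + 3) (l, q) 0 = halinBack l (l, q) 0 by
            rw [hl']; exact halinBack_parent _ _ _ _,
          hnbr _ hmem, hold _ le_rfl, hback]
      · obtain ⟨q', hq', e1, e2, e3, e4⟩ := halinNbr_left_block hl hq
        have := hback 1
        rw [e1, e2] at this
        change e' (halinNbr (l + 3) (l + 3, 8 * q) 1) (halinBack (l + 3) (l + 3, 8 * q) 1) = φ q 1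
        rw [e3, e4, h1, ← this, ← (hφ q' hq').2.2.2.2]
        exact hblock q' 3 7 2 hq' (by norm_num)
      · obtain ⟨q', hq', e1, e2, e3, e4⟩ := halinNbr_right_block hl hq
        have := hback 2
        rw [e1, e2] at this
        change e' (halinNbr (l + 3) (l + 3, 8 * q + 7) 2)
          (halinBack (l + 3) (l + 3, 8 * q + 7) 2) = φ q 2
        rw [e3, e4, h2, ← this, ← (hφ q' hq').2.2.2.1]
        exact hblock q' 3 0 1 hq' (by norm_num)
    · rw [hinner q i r s p hq hi hr hp, halinBack_block hl hi s (by simp [hp]),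
        blockColor_back i hi r hr s p hp, hblock q i r s hq hr]
  · intro p hp hpl
    rw [hold p hp.1]
    exact he.injective p hp
  · intro q i r hq hi hr s t hst
    rw [hblock q i r s hq hr, hblock q i r t hq hr] at hst
    exact blockColor_injective i hi r hr s t ((hφ q hq).1 hst)
  · intro p hp hpl
    change ∀ s t, s ≠ t → ∀ s' t',
      e' (halinNbr (l + 3) p s) s' = e' p t → e' (halinNbr (l + 3) p t) t' ≠ e' p s
    simp only [halinNbr_of_lt hpl, hnbr p hp, hold p hp.1]
    exact he.star p hp
  · intro q i r hq hi hr s t hst s' t'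
    change e' (halinNbr (l + 3) _ s) s' = e' _ t → e' (halinNbr (l + 3) _ t) t' ≠ e' _ s
    have hinj := (hφ q hq).1
    rw [hblock q i r s hq hr, hblock q i r t hq hr]
    rcases hs : blockNbr i r s with _ | p <;> rcases ht : blockNbr i r t with _ | p'
    · simpa [hs, ht] using blockNbr_isSome i hi r hr s t hst
    · rw [hinner q i r t p' hq hi hr ht, hinj.ne_iff]
      exact fun _ => blockColor_star_of_isNone i hi r hr s t hst p' ht (by simp [hs]) t'
    · rw [hinner q i r s p hq hi hr hs, hinj.eq_iff]
      exact fun h =>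
        (blockColor_star_of_isNone i hi r hr t s hst.symm p hs (by simp [ht]) s' h).elim
    · rw [hinner q i r s p hq hi hr hs, hinner q i r t p' hq hi hr ht, hinj.eq_iff, hinj.ne_iff]
      exact blockColor_star i hi r hr s t hst p hs p' ht _ _

/-- For every `l ≥ 1`, if `G_l` admits a star 5-edge coloring then so does `G_{l+3}`. -/
theorem completeHalin_star5_step (l : ℕ) (hl : 1 ≤ l)
    (h : ∃ c : Sym2 (HalinVert l) → ℕ, IsStarEdgeColoring (completeHalin l) 5 c) :
    ∃ c : Sym2 (HalinVert (l + 3)) → ℕ, IsStarEdgeColoring (completeHalin (l + 3)) 5 c := by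
  rw [(halinPorts l hl).exists_isStarEdgeColoring_iff _ _ (halinCoord_injective l)
    (range_halinCoord l) (completeHalin_adj_iff l hl)] at h
  rw [(halinPorts (l + 3) (by omega)).exists_isStarEdgeColoring_iff _ _
    (halinCoord_injective (l + 3)) (range_halinCoord (l + 3))
    (completeHalin_adj_iff (l + 3) (by omega))]
  obtain ⟨e, he⟩ := h
  exact halinPorts_isStarColoring_step l hl e he
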